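/- arXiv:0807.1967 — 2 statements merged into one kernel-verified Lean document; each statement's English description precedes it below -/
import Mathlib

section
/- Let D ⊆ ℝ[X₁,…,Xₙ]\{0} be a multiplicatively closed set with 1 ∈ D and E = D⁻¹ℝ[X₁,…,Xₙ]. For any semialgebraic set K ⊆ ℝⁿ, the preordering Pos^E(K) = {R ∈ E : there exist f ∈ ℝ[X₁,…,Xₙ], d ∈ D with R = f/d and f·d ≥ 0 pointwise on K} is closed in the topology of finitely open sets on E. -/
/-!
Fix a finite-dimensional `U ⊆ E` and write its elements over a common denominator `d`. A fraction
`f/d` lies in `Pos^E(K)` iff `f d ≥ 0` on `K` off the zero set of some `s ∈ D`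
(`mk_mem_PosE_iff`). If `f_k/d ∈ Pos^E(K)`, with exceptional polynomials `s_k ∈ D`, converges to
`f/d` in `U`, then `f_k → f` pointwise, so `f d ≥ 0` on `K` off the countable union of the zero sets
`Z(s_k)`. In other words the semialgebraic set `K ∩ {f d < 0}` is covered by the `Z(s_k)`. The heart
of the proof is that finitely many of them already cover it (`semialgebraic_finite_subcover`); their
product then lies in `D` and witnesses `f/d ∈ Pos^E(K)`.

The finite subcover is obtained by Noetherian induction on an ideal `I`, for the set
`S = {f = 0} ∩ O ∩ V(I)` with `O` open (`finite_subcover`). The only case that does not pass to a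
larger ideal is that `I` is prime and is the full vanishing ideal of `S`. If no `s_k` lay in `I`,
there would be a point of `S`, near any suitable point of `S`, at which no `s_k` vanishes.

That last fact is `generic_points_dense`: for a prime `I` there is `h ∉ I` such that every real
point of `V(I)` with `h ≠ 0` is a limit of real points of `V(I)` avoiding any prescribed countable
family of hypersurfaces not containing `V(I)`. It is proved one variable at a time. Regard `I` as a
prime of `B[X]` with contraction `J` to `B`. If `I = J[X]`, a generic point over `J` is found by
induction and `X` is moved off countably many roots. Otherwise a minimal `P ∈ I` outside `J[X]`
defines `X` algebraically over `J`; at points where `∂P/∂X ≠ 0` its root persists under small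
perturbation of the base point (`simple_root_persists`), and membership in `V(I)` follows from
`P = 0` by pseudo-division (`eval_eq_zero_of_mem`).
-/

open MvPolynomial MeasureTheory

noncomputable section

/-- The Euclidean (weak) topology on a real vector space; for finite-dimensional
spaces this is the usual Euclidean topology. -/
def weakTop (V : Type*) [AddCommGroup V] [Module ℝ V] : TopologicalSpace V :=
  ⨅ L : V →ₗ[ℝ] ℝ, TopologicalSpace.induced L inferInstance

/-- The topology of finitely open sets: `O` is open iff its intersection with every
finite-dimensional subspace `U` is open in the Euclidean topology of `U`. -/
def finTop (E : Type*) [AddCommGroup E] [Module ℝ E] : TopologicalSpace E where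
  IsOpen O := ∀ U : Submodule ℝ E, FiniteDimensional ℝ U →
    @IsOpen _ (weakTop U) ((Subtype.val : U → E) ⁻¹' O)
  isOpen_univ := by
    intro U _
    letI := weakTop U
    rw [Set.preimage_univ]
    exact isOpen_univ
  isOpen_inter := by
    intro s t hs ht U hU
    letI := weakTop U
    rw [Set.preimage_inter]
    exact (hs U hU).inter (ht U hU)
  isOpen_sUnion := by
    intro s hs U hU
    letI := weakTop U
    rw [Set.preimage_sUnion]
    exact isOpen_biUnion fun t ht => hs t ht U hU

/-- The closure of a convex cone in the finest locally convex topology, via the dual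
characterization: `x` lies in the closure iff `L x ≥ 0` for every linear functional `L`
nonnegative on the cone. -/
def dualClosure {E : Type*} [AddCommGroup E] [Module ℝ E] (C : Set E) : Set E :=
  {x | ∀ L : E →ₗ[ℝ] ℝ, (∀ c ∈ C, 0 ≤ L c) → 0 ≤ L x}

/-- The preordering generated by `g 1, …, g m` in a commutative ring: all finite sums
of elements `σ • g₁^ν₁ ⋯ g_m^ν_m` with `σ` a sum of squares and `ν ∈ {0,1}^m`. -/
def genPreordering {E : Type*} [CommRing E] {m : ℕ} (g : Fin m → E) : Set E :=
  {x | ∃ σ : (Fin m → Bool) → E, (∀ ν, IsSumSq (σ ν)) ∧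
    x = ∑ ν : Fin m → Bool, σ ν * ∏ j, (if ν j then g j else 1)}

/-- The basic closed semialgebraic set determined by `g 1, …, g m`. -/
def KS {n m : ℕ} (g : Fin m → MvPolynomial (Fin n) ℝ) : Set (Fin n → ℝ) :=
  {x | ∀ i, 0 ≤ eval x (g i)}

/-- The real zero set of a polynomial. -/
def Zset {n : ℕ} (d : MvPolynomial (Fin n) ℝ) : Set (Fin n → ℝ) :=
  {x | eval x d = 0}

/-- `Pos^E(𝒳)`: elements of the localization having a representation `f/d` with
`f·d ≥ 0 pointwise on 𝒳`. -/
def PosE {n : ℕ} (D : Submonoid (MvPolynomial (Fin n) ℝ)) (X : Set (Fin n → ℝ)) :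
    Set (Localization D) :=
  {R | ∃ (f : MvPolynomial (Fin n) ℝ) (d : D), R = Localization.mk f d ∧
    ∀ x ∈ X, 0 ≤ eval x f * eval x (d : MvPolynomial (Fin n) ℝ)}


/-- A basic semialgebraic set: `{x | f x = 0 ∧ g₁ x > 0 ∧ ⋯ ∧ g_r x > 0}`. -/
def IsBasicSemialgebraic {n : ℕ} (s : Set (Fin n → ℝ)) : Prop :=
  ∃ (f : MvPolynomial (Fin n) ℝ) (r : ℕ) (g : Fin r → MvPolynomial (Fin n) ℝ),
    s = {x | eval x f = 0 ∧ ∀ i, 0 < eval x (g i)}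

/-- A semialgebraic set: a finite union of basic semialgebraic sets. -/
def IsSemialgebraic {n : ℕ} (s : Set (Fin n → ℝ)) : Prop :=
  ∃ (k : ℕ) (c : Fin k → Set (Fin n → ℝ)),
    (∀ i, IsBasicSemialgebraic (c i)) ∧ s = ⋃ i, c i

/-! ### Persistence of simple roots -/

/-- A simple real root of a polynomial whose coefficients depend polynomially on parameters survives
a small change of the parameters, by the intermediate value theorem. -/
theorem simple_root_persists {n : ℕ} (P : Polynomial (MvPolynomial (Fin n) ℝ))
    (b : Fin n → ℝ) (t : ℝ) (h0 : (P.map (eval b)).eval t = 0)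
    (h1 : (P.derivative.map (eval b)).eval t ≠ 0) {ε : ℝ} (hε : 0 < ε) :
    ∀ᶠ b' in nhds b, ∃ t', dist t' t < ε ∧ (P.map (eval b')).eval t' = 0 := by
  have hcont : ∀ s : ℝ, Continuous fun b' : Fin n → ℝ => (P.map (eval b')).eval s := by
    intro s
    simp only [Polynomial.eval_map, Polynomial.eval₂_eq_sum_range]
    exact continuous_finsetSum _ fun i _ =>
      (MvPolynomial.continuous_eval _).mul continuous_const
  wlog hpos : 0 < (P.derivative.map (eval b)).eval t generalizing P
  · have := this (-P) (by simpa using h0) (by simpa using h1)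
      (by
        intro s
        simp only [Polynomial.map_neg, Polynomial.eval_neg]
        exact (hcont s).neg)
      (by
        have : (P.derivative.map (eval b)).eval t < 0 := lt_of_le_of_ne (not_lt.1 hpos) h1
        simpa using this)
    simpa using this
  have hd : HasDerivAt (fun s => (P.map (eval b)).eval s)
      ((P.derivative.map (eval b)).eval t) t := by
    rw [← Polynomial.derivative_map]
    exact Polynomial.hasDerivAt _ _
  have hs := (hasDerivAt_iff_tendsto_slope.1 hd).eventually (lt_mem_nhds hpos)
  rw [eventually_nhdsWithin_iff, Metric.eventually_nhds_iff] at hs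
  obtain ⟨δ, hδ, hs⟩ := hs
  obtain ⟨r, hr, hrlt⟩ : ∃ r, 0 < r ∧ r < min δ ε := exists_between (lt_min hδ hε)
  have hrδ := hrlt.trans_le (min_le_left _ _)
  have hrε := hrlt.trans_le (min_le_right _ _)
  have hR : 0 < (P.map (eval b)).eval (t + r) := by
    have := @hs (t + r) (by simpa [abs_of_pos hr] using hrδ) (by simpa using hr.ne')
    rw [slope_def_field, h0, sub_zero, add_sub_cancel_left] at this
    exact (div_pos_iff_of_pos_right hr).1 this
  have hL : (P.map (eval b)).eval (t - r) < 0 := by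
    have := @hs (t - r) (by simpa [abs_of_pos hr] using hrδ) (by simpa using hr.ne')
    rw [slope_def_field, h0, sub_zero, sub_sub_cancel_left, div_neg, neg_pos] at this
    by_contra hcon
    exact absurd (div_nonneg (not_lt.1 hcon) hr.le) (not_le.2 this)
  filter_upwards [(hcont (t + r)).continuousAt.eventually (lt_mem_nhds hR),
    (hcont (t - r)).continuousAt.eventually (gt_mem_nhds hL)] with b' hbR hbL
  obtain ⟨t', ht', h⟩ := intermediate_value_Icc (by linarith : t - r ≤ t + r)
    ((P.map (eval b')).continuous.continuousOn) ⟨hbL.le, hbR.le⟩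
  refine ⟨t', ?_, h⟩
  rw [Real.dist_eq, abs_lt]
  constructor <;> linarith [ht'.1, ht'.2]

/-! ### Eliminating one variable from a prime ideal -/

section Elimination

variable {B : Type*} [CommRing B]

open Polynomial in
/-- If `I` is not extended from its contraction `J` to `B`, an element of `I` outside `J[X]` of least
degree has leading coefficient outside `J`. -/
theorem exists_minimal_relation (I : Ideal B[X])
    (hne : ∃ Q ∈ I, Q ∉ (I.comap Polynomial.C).map Polynomial.C) :
    ∃ P ∈ I, P.leadingCoeff ∉ I.comap Polynomial.C ∧
      ∀ Q ∈ I, Q.natDegree < P.natDegree → Q ∈ (I.comap Polynomial.C).map Polynomial.C := by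
  classical
  obtain ⟨P, ⟨hP, hPJ⟩, hmin⟩ := (measure (Polynomial.natDegree (R := B))).wf.has_min
    {Q | Q ∈ I ∧ Q ∉ (I.comap Polynomial.C).map Polynomial.C} hne
  have hmin' : ∀ Q ∈ I, Q.natDegree < P.natDegree → Q ∈ (I.comap Polynomial.C).map Polynomial.C := by
    intro Q hQ hlt
    by_contra h
    exact hmin Q ⟨hQ, h⟩ hlt
  refine ⟨P, hP, fun hlc => hPJ ?_, hmin'⟩
  have hmon : Polynomial.C P.leadingCoeff * Polynomial.X ^ P.natDegree ∈
      (I.comap Polynomial.C).map Polynomial.C :=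
    Ideal.mul_mem_right _ _ (Ideal.mem_map_of_mem _ hlc)
  have hle : (I.comap Polynomial.C).map Polynomial.C ≤ I := Ideal.map_comap_le
  have her := P.eraseLead_add_C_mul_X_pow
  rw [← her]
  refine add_mem ?_ hmon
  by_cases hdeg : P.natDegree = 0
  · have : P.eraseLead = 0 := by
      rw [hdeg, pow_zero, mul_one, Polynomial.leadingCoeff, hdeg,
        ← Polynomial.eq_C_of_natDegree_eq_zero hdeg] at her
      simpa using her
    rw [this]; exact zero_mem _
  · refine hmin' _ ?_ ((eraseLead_natDegree_le _).trans_lt (by omega))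
    have : P.eraseLead = P - Polynomial.C P.leadingCoeff * Polynomial.X ^ P.natDegree := by
      rw [eq_sub_iff_add_eq]; exact her
    rw [this]; exact sub_mem hP (hle hmon)

open Polynomial in
/-- Pseudo-division by the minimal relation `P`: over a real point `φ` of the contraction of `I` at
which the leading coefficient of `P` does not vanish, each root of `P` is a zero of all of `I`. -/
theorem eval_eq_zero_of_mem (I : Ideal B[X]) {P : B[X]} (hP : P ∈ I)
    (hmin : ∀ Q ∈ I, Q.natDegree < P.natDegree → Q ∈ (I.comap Polynomial.C).map Polynomial.C)
    (φ : B →+* ℝ) (hφ : ∀ a ∈ I.comap Polynomial.C, φ a = 0) (hc : φ P.leadingCoeff ≠ 0)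
    {t : ℝ} (ht : (P.map φ).eval t = 0) : ∀ Q ∈ I, (Q.map φ).eval t = 0 := by
  have hJ : ∀ Q ∈ (I.comap Polynomial.C).map Polynomial.C, (Q.map φ).eval t = 0 := by
    intro Q hQ
    have : Q.map φ = 0 := by
      ext i; simpa using hφ _ (Ideal.mem_map_C_iff.1 hQ i)
    simp [this]
  have hP0 : 0 < P.natDegree := by
    by_contra h
    have h : P.natDegree = 0 := by omega
    apply hc
    apply hφ
    rw [Polynomial.eq_C_of_natDegree_eq_zero h] at hP ⊢
    simpa using hP
  intro Q
  induction hd : Q.natDegree using Nat.strong_induction_on generalizing Q with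
  | _ d ih =>
    intro hQ
    rcases lt_or_ge Q.natDegree P.natDegree with hlt | hge
    · exact hJ Q (hmin Q hQ hlt)
    · set Q₁ := Polynomial.C P.leadingCoeff * Q -
          Polynomial.C Q.leadingCoeff * Polynomial.X ^ (Q.natDegree - P.natDegree) * P
        with hQ₁
      have hmem : Q₁ ∈ I := sub_mem (Ideal.mul_mem_left _ _ hQ) (Ideal.mul_mem_left _ _ hP)
      have hdeg : Q₁.natDegree < d := by
        have h1 : Q₁.natDegree ≤ d - 1 := by
          rw [natDegree_le_iff_coeff_eq_zero]
          intro N hN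
          rw [hQ₁, mul_assoc, Polynomial.coeff_sub, Polynomial.coeff_C_mul, Polynomial.coeff_C_mul]
          obtain ⟨k, rfl⟩ : ∃ k, N = k + (Q.natDegree - P.natDegree) :=
            ⟨N - (Q.natDegree - P.natDegree), by omega⟩
          rw [coeff_X_pow_mul]
          rcases eq_or_lt_of_le (show P.natDegree ≤ k by omega) with rfl | hk
          · rw [Nat.add_sub_cancel' hge, coeff_natDegree, coeff_natDegree]; ring
          · rw [coeff_eq_zero_of_natDegree_lt hk, coeff_eq_zero_of_natDegree_lt (by omega)]; simp
        omega
      have := ih _ hdeg Q₁ rfl hmem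
      rw [hQ₁] at this
      simpa [ht, hc] using this

open Polynomial in
/-- When `B[X] ⧸ I` is algebraic over its subring `B ⧸ J`, as witnessed by `P`, every nonzero element
of it has a nonzero multiple in `B ⧸ J`. -/
theorem exists_multiple (I : Ideal B[X]) [I.IsPrime] {P : B[X]} (hP : P ∈ I)
    (hc : P.leadingCoeff ∉ I.comap Polynomial.C) {e : B[X]} (he : e ∉ I) :
    ∃ c ∉ I.comap Polynomial.C, ∃ u, Polynomial.C c - u * e ∈ I := by
  let J : Ideal B := I.comap (algebraMap B B[X])
  have : J.IsPrime := Ideal.IsPrime.comap _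
  have hX : IsAlgebraic (B ⧸ J) (Ideal.Quotient.mk I Polynomial.X) := by
    refine ⟨P.map (Ideal.Quotient.mk J), ?_, ?_⟩
    · intro h0
      apply hc
      have := congrArg (fun p => p.coeff P.natDegree) h0
      have hmem : P.leadingCoeff ∈ J := by simpa [Ideal.Quotient.eq_zero_iff_mem] using this
      exact hmem
    · rw [Polynomial.aeval_def, Polynomial.eval₂_map]
      have : (algebraMap (B ⧸ J) (B[X] ⧸ I)).comp (Ideal.Quotient.mk J) =
          (Ideal.Quotient.mk I).comp Polynomial.C := rfl
      rw [this, ← Polynomial.hom_eval₂, eval₂_C_X]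
      exact Ideal.Quotient.eq_zero_iff_mem.2 hP
  have hall : IsAlgebraic (B ⧸ J) (Ideal.Quotient.mk I e) := by
    have : ∀ q : B[X], IsAlgebraic (B ⧸ J) (Ideal.Quotient.mk I q) := by
      intro q
      induction q using Polynomial.induction_on' with
      | add p q hp hq => rw [map_add]; exact hp.add hq
      | monomial n a =>
        rw [← Polynomial.C_mul_X_pow_eq_monomial, map_mul, map_pow]
        exact (isAlgebraic_algebraMap (A := B[X] ⧸ I) (Ideal.Quotient.mk J a)).mul (hX.pow n)
    exact this e
  obtain ⟨r, hr, u, hu⟩ := hall.exists_nonzero_dvd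
    (mem_nonZeroDivisors_of_ne_zero (by simpa [Ideal.Quotient.eq_zero_iff_mem] using he))
  obtain ⟨c, rfl⟩ := Ideal.Quotient.mk_surjective r
  obtain ⟨u, rfl⟩ := Ideal.Quotient.mk_surjective u
  refine ⟨c, fun h => hr (Ideal.Quotient.eq_zero_iff_mem.2 h), u, ?_⟩
  rw [← Ideal.Quotient.mk_eq_mk_iff_sub_mem, mul_comm, map_mul, ← hu]
  rfl
end Elimination

/-! ### Generic real points -/

/-- For a prime ideal `I` there is `h ∉ I` such that each real zero of `I` with `h ≠ 0` is a limit
of real zeros of `I` at which none of countably many given polynomials outside `I` vanishes. -/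
theorem generic_points_dense (n : ℕ) (I : Ideal (MvPolynomial (Fin n) ℝ)) (hI : I.IsPrime) :
    ∃ h ∉ I, ∀ p : Fin n → ℝ, (∀ f ∈ I, eval p f = 0) → eval p h ≠ 0 →
      ∀ e : ℕ → MvPolynomial (Fin n) ℝ, (∀ k, e k ∉ I) → ∀ ε > 0,
        ∃ q, dist q p < ε ∧ (∀ f ∈ I, eval q f = 0) ∧ ∀ k, eval q (e k) ≠ 0 := by
  induction n with
  | zero =>
    refine ⟨1, (Ideal.ne_top_iff_one I).1 hI.ne_top, fun p hp _ e he ε hε => ⟨p, by simpa, hp, ?_⟩⟩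
    intro k h0
    apply he k
    rw [MvPolynomial.eq_C_of_isEmpty (e k)] at h0 ⊢
    rw [eval_C] at h0
    rw [h0, C_0]
    exact zero_mem _
  | succ n ih =>
    -- `I'` is `I` seen inside `B[X]`, where `B` is the polynomial ring in the last `n` variables.
    let σ := MvPolynomial.finSuccEquiv ℝ n
    let I' : Ideal (Polynomial (MvPolynomial (Fin n) ℝ)) := I.comap σ.symm
    have hI' : I'.IsPrime := Ideal.IsPrime.comap _
    have hmem : ∀ f, f ∈ I ↔ σ f ∈ I' := fun f => by simp [I']
    have hev : ∀ (b : Fin n → ℝ) (t : ℝ) f,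
        eval (Fin.cons t b : Fin (n + 1) → ℝ) f = ((σ f).map (eval b)).eval t :=
      fun b t f => MvPolynomial.eval_eq_eval_mv_eval' b t f
    suffices H : ∃ h ∉ I', ∀ (b : Fin n → ℝ) (t : ℝ),
        (∀ Q ∈ I', (Q.map (eval b)).eval t = 0) → (h.map (eval b)).eval t ≠ 0 →
        ∀ e : ℕ → Polynomial (MvPolynomial (Fin n) ℝ), (∀ k, e k ∉ I') → ∀ ε > 0,
          ∃ (b' : Fin n → ℝ) (t' : ℝ), dist b' b < ε ∧ dist t' t < ε ∧
            (∀ Q ∈ I', (Q.map (eval b')).eval t' = 0) ∧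
            ∀ k, ((e k).map (eval b')).eval t' ≠ 0 by
      obtain ⟨h, hh, H⟩ := H
      refine ⟨σ.symm h, hh, fun p hp hhp e he ε hε => ?_⟩
      obtain ⟨t, b, rfl⟩ : ∃ (t : ℝ) (b : Fin n → ℝ), p = Fin.cons t b :=
        ⟨p 0, Fin.tail p, (Fin.cons_self_tail p).symm⟩
      obtain ⟨b', t', hb, ht, hz, hne⟩ := H b t
        (fun Q hQ => by simpa [hev] using hp (σ.symm Q) hQ) (by simpa [hev] using hhp)
        (fun k => σ (e k)) (fun k hk => he k ((hmem _).2 hk)) ε hε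
      refine ⟨Fin.cons t' b', ?_, fun f hf => ?_, fun k => ?_⟩
      · rw [dist_pi_lt_iff hε]
        intro i
        refine Fin.cases ?_ (fun j => ?_) i
        · simpa using ht
        · simpa using (dist_le_pi_dist b' b j).trans_lt hb
      · rw [hev]; exact hz _ ((hmem f).1 hf)
      · rw [hev]; exact hne k
    let J : Ideal (MvPolynomial (Fin n) ℝ) := I'.comap Polynomial.C
    have hJ : J.IsPrime := Ideal.IsPrime.comap _
    obtain ⟨h, hhJ, ih⟩ := ih J hJ
    have hbase : ∀ (b : Fin n → ℝ) (t : ℝ), (∀ Q ∈ I', (Q.map (eval b)).eval t = 0) →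
        ∀ a ∈ J, eval b a = 0 := fun b t hb a ha => by simpa using hb (Polynomial.C a) ha
    by_cases htr : ∃ Q ∈ I', Q ∉ J.map Polynomial.C
    · obtain ⟨P, hP, hlc, hmin⟩ := exists_minimal_relation I' htr
      have hderiv : P.derivative ∉ I' := by
        intro hd
        have hpos : 0 < P.natDegree := by
          by_contra h0
          have h0 : P.natDegree = 0 := by omega
          apply hlc
          rw [Polynomial.eq_C_of_natDegree_eq_zero h0] at hP ⊢
          simpa using hP
        have := hmin _ hd (Polynomial.natDegree_derivative_lt (by omega))
        have := Ideal.mem_map_C_iff.1 this (P.natDegree - 1)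
        rw [Polynomial.coeff_derivative, Nat.sub_add_cancel hpos] at this
        rcases hJ.mem_or_mem this with h1 | h1
        · exact hlc h1
        -- the factor `natDegree P` is a nonzero real constant, hence a unit
        · refine hJ.ne_top (Ideal.eq_top_of_isUnit_mem _ h1 ?_)
          have : ((P.natDegree - 1 : ℕ) : MvPolynomial (Fin n) ℝ) + 1
              = C (((P.natDegree - 1 : ℕ) : ℝ) + 1) := by simp
          rw [this]
          exact (IsUnit.mk0 _ (by positivity)).map C
      refine ⟨Polynomial.C h * (Polynomial.C P.leadingCoeff * P.derivative), ?_, ?_⟩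
      · intro hcon
        rcases hI'.mem_or_mem hcon with h1 | h1
        · exact hhJ h1
        rcases hI'.mem_or_mem h1 with h1 | h1
        · exact hlc h1
        · exact hderiv h1
      intro b t hz hne e he ε hε
      simp only [Polynomial.map_mul, Polynomial.map_C, Polynomial.eval_mul, Polynomial.eval_C,
        mul_ne_zero_iff] at hne
      obtain ⟨hhb, -, hdb⟩ := hne
      choose c hcJ u hu using fun k => exists_multiple I' hP hlc (he k)
      obtain ⟨δ, hδ, hroot⟩ := Metric.eventually_nhds_iff.1
        (simple_root_persists P b t (hz P hP) hdb hε)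
      -- the leading coefficient of `P` joins the countable family that must not vanish
      obtain ⟨b', hb', hb'J, hb'c⟩ := ih b (hbase b t hz) hhb
        (fun k => P.leadingCoeff * c k)
        (fun k hk => (hJ.mem_or_mem hk).elim hlc (hcJ k)) (min δ ε) (lt_min hδ hε)
      simp only [map_mul, mul_ne_zero_iff] at hb'c
      obtain ⟨t', ht', hPt'⟩ := hroot (hb'.trans_le (min_le_left _ _))
      have hz' := eval_eq_zero_of_mem I' hP hmin (eval b') hb'J (hb'c 0).1 hPt'
      refine ⟨b', t', hb'.trans_le (min_le_right _ _), ht', hz', fun k hk => ?_⟩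
      have := hz' _ (hu k)
      simp only [Polynomial.map_sub, Polynomial.map_C, Polynomial.map_mul, Polynomial.eval_sub,
        Polynomial.eval_C, Polynomial.eval_mul, hk, mul_zero, sub_zero] at this
      exact (hb'c k).2 this
    · push Not at htr
      refine ⟨Polynomial.C h, hhJ, fun b t hz hne e he ε hε => ?_⟩
      have hcoeff : ∀ k, ∃ i, (e k).coeff i ∉ J := by
        intro k
        by_contra! hcon
        exact he k (Ideal.map_comap_le (Ideal.mem_map_C_iff.2 hcon))
      choose i hi using hcoeff
      obtain ⟨b', hb', hb'J, hb'c⟩ := ih b (hbase b t hz) (by simpa using hne)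
        (fun k => (e k).coeff (i k)) hi ε hε
      have hpoly : ∀ k, (e k).map (eval b') ≠ 0 := by
        intro k h0
        apply hb'c k
        simpa using congrArg (fun p => p.coeff (i k)) h0
      have hcount : (⋃ k, {s : ℝ | ((e k).map (eval b')).IsRoot s}).Countable :=
        Set.countable_iUnion fun k => (Polynomial.finite_setOfPred_isRoot (hpoly k)).countable
      obtain ⟨t', ht'⟩ := (hcount.dense_compl ℝ).exists_dist_lt t hε
      refine ⟨b', t', hb', by rw [dist_comm]; exact ht'.2, fun Q hQ => ?_, fun k hk => ?_⟩
      · have : Q.map (eval b') = 0 := by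
          ext j; simpa using hb'J _ (Ideal.mem_map_C_iff.1 (htr Q hQ) j)
        simp [this]
      · exact ht'.1 (Set.mem_iUnion.2 ⟨k, hk⟩)

/-! ### Countable covers by hypersurfaces -/

/-- A locally closed set `{f = 0} ∩ O` covered by countably many real hypersurfaces is covered by
finitely many of them. -/
theorem finite_subcover {n : ℕ} (f : MvPolynomial (Fin n) ℝ) (O : Set (Fin n → ℝ))
    (hO : IsOpen O) (e : ℕ → MvPolynomial (Fin n) ℝ)
    (hcov : ∀ x ∈ O, eval x f = 0 → ∃ k, eval x (e k) = 0) :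
    ∃ N, ∀ x ∈ O, eval x f = 0 → ∃ k < N, eval x (e k) = 0 := by
  suffices H : ∀ I : Ideal (MvPolynomial (Fin n) ℝ), ∃ N, ∀ x ∈ O, eval x f = 0 →
      (∀ a ∈ I, eval x a = 0) → ∃ k < N, eval x (e k) = 0 by
    obtain ⟨N, hN⟩ := H ⊥
    exact ⟨N, fun x hx hf => hN x hx hf fun a ha => by simp [Ideal.mem_bot.1 ha]⟩
  intro I
  induction I using (wellFounded_gt (α := Ideal (MvPolynomial (Fin n) ℝ))).induction with
  | _ I ih =>
  have hstep : ∀ a ∉ I, ∃ N, ∀ x ∈ O, eval x f = 0 → (∀ a ∈ I, eval x a = 0) →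
      eval x a = 0 → ∃ k < N, eval x (e k) = 0 := by
    intro a ha
    obtain ⟨N, hN⟩ := ih (I ⊔ Ideal.span {a})
      (left_lt_sup.2 fun h => ha (h (Ideal.mem_span_singleton_self a)))
    refine ⟨N, fun x hx hf hI hax => hN x hx hf ?_⟩
    have : I ⊔ Ideal.span {a} ≤ RingHom.ker (eval x) :=
      sup_le hI ((Ideal.span_singleton_le_iff_mem _).2 hax)
    exact this
  by_cases htop : I = ⊤
  · refine ⟨0, fun x _ _ hI => ?_⟩
    have := hI 1 (by simp [htop])
    simp at this
  by_cases hprime : I.IsPrime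
  · by_cases hvan : ∃ a ∉ I, ∀ x ∈ O, eval x f = 0 → (∀ a ∈ I, eval x a = 0) → eval x a = 0
    · obtain ⟨a, ha, hvan⟩ := hvan
      obtain ⟨N, hN⟩ := hstep a ha
      exact ⟨N, fun x hx hf hI => hN x hx hf hI (hvan x hx hf hI)⟩
    by_cases hk : ∃ k, e k ∈ I
    · obtain ⟨k, hk⟩ := hk
      exact ⟨k + 1, fun x _ _ hI => ⟨k, Nat.lt_succ_self k, hI _ hk⟩⟩
    exfalso
    push Not at hvan hk
    obtain ⟨h, hh, H⟩ := generic_points_dense n I hprime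
    obtain ⟨p, hpO, -, hpI, hph⟩ := hvan h hh
    obtain ⟨ε, hε, hball⟩ := Metric.isOpen_iff.1 hO p hpO
    obtain ⟨q, hqp, hqI, hq⟩ := H p hpI hph e hk ε hε
    have hfI : f ∈ I := by
      by_contra hfI
      obtain ⟨x, _, hx, _, hx'⟩ := hvan f hfI
      exact hx' hx
    obtain ⟨k, hk⟩ := hcov q (hball hqp) (hqI f hfI)
    exact hq k hk
  · rw [Ideal.isPrime_iff] at hprime
    push Not at hprime
    obtain ⟨a, b, hab, ha, hb⟩ := hprime htop
    obtain ⟨N, hN⟩ := hstep a ha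
    obtain ⟨M, hM⟩ := hstep b hb
    refine ⟨max N M, fun x hx hf hI => ?_⟩
    have := hI _ hab
    rw [map_mul, mul_eq_zero] at this
    rcases this with h0 | h0
    · obtain ⟨k, hk, h⟩ := hN x hx hf hI h0
      exact ⟨k, hk.trans_le (le_max_left _ _), h⟩
    · obtain ⟨k, hk, h⟩ := hM x hx hf hI h0
      exact ⟨k, hk.trans_le (le_max_right _ _), h⟩

theorem semialgebraic_finite_subcover {n : ℕ} {K : Set (Fin n → ℝ)} (hK : IsSemialgebraic K)
    {O : Set (Fin n → ℝ)} (hO : IsOpen O) (e : ℕ → MvPolynomial (Fin n) ℝ)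
    (hcov : ∀ x ∈ K, x ∈ O → ∃ k, eval x (e k) = 0) :
    ∃ N, ∀ x ∈ K, x ∈ O → ∃ k < N, eval x (e k) = 0 := by
  obtain ⟨m, c, hc, rfl⟩ := hK
  have hpiece : ∀ i, ∃ N, ∀ x ∈ c i, x ∈ O → ∃ k < N, eval x (e k) = 0 := by
    intro i
    obtain ⟨f, r, g, hfg⟩ := hc i
    have hopen : IsOpen ({x | ∀ j, 0 < eval x (g j)} ∩ O) := by
      refine IsOpen.inter ?_ hO
      rw [Set.ofPred_forall]
      exact isOpen_iInter_of_finite fun j =>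
        isOpen_lt continuous_const (MvPolynomial.continuous_eval _)
    obtain ⟨N, hN⟩ := finite_subcover f _ hopen e fun x hx hf =>
      hcov x (Set.mem_iUnion.2 ⟨i, by rw [hfg]; exact ⟨hf, hx.1⟩⟩) hx.2
    refine ⟨N, fun x hx hxO => ?_⟩
    rw [hfg] at hx
    exact hN x ⟨hx.2, hxO⟩ hx.1
  choose N hN using hpiece
  refine ⟨Finset.univ.sup N, fun x hx hxO => ?_⟩
  obtain ⟨i, hi⟩ := Set.mem_iUnion.1 hx
  obtain ⟨k, hk, h⟩ := hN i x hi hxO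
  exact ⟨k, hk.trans_le (Finset.le_sup (Finset.mem_univ i)), h⟩

/-! ### The cone `PosE` -/

/-- Membership in `PosE D K` read off a fixed representation `f/d`: the sign condition may fail on the
zero set of one element of `D`. -/
theorem mk_mem_PosE_iff {n : ℕ} {D : Submonoid (MvPolynomial (Fin n) ℝ)}
    (hD0 : (0 : MvPolynomial (Fin n) ℝ) ∉ D) (K : Set (Fin n → ℝ))
    (f : MvPolynomial (Fin n) ℝ) (d : D) :
    Localization.mk f d ∈ PosE D K ↔ ∃ s ∈ D, ∀ x ∈ K, eval x s ≠ 0 →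
      0 ≤ eval x f * eval x (d : MvPolynomial (Fin n) ℝ) := by
  constructor
  · rintro ⟨f', d', heq, hpos⟩
    obtain ⟨c, hc⟩ := Localization.r_iff_exists.1 (Localization.mk_eq_mk_iff.1 heq)
    have hc0 : (c : MvPolynomial (Fin n) ℝ) ≠ 0 := fun h => hD0 (h ▸ c.2)
    have hcross := mul_left_cancel₀ hc0 hc
    refine ⟨d', d'.2, fun x hx hne => ?_⟩
    have hev := congrArg (eval x) hcross
    simp only [map_mul] at hev
    have h2 : 0 ≤ (eval x f * eval x (d : MvPolynomial (Fin n) ℝ)) *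
        eval x (d' : MvPolynomial (Fin n) ℝ) ^ 2 := by
      have : (eval x f * eval x (d : MvPolynomial (Fin n) ℝ)) *
          eval x (d' : MvPolynomial (Fin n) ℝ) ^ 2
          = (eval x f' * eval x (d' : MvPolynomial (Fin n) ℝ)) *
            eval x (d : MvPolynomial (Fin n) ℝ) ^ 2 := by
        linear_combination
          eval x (d : MvPolynomial (Fin n) ℝ) * eval x (d' : MvPolynomial (Fin n) ℝ) * hev
      rw [this]
      exact mul_nonneg (hpos x hx) (sq_nonneg _)
    exact nonneg_of_mul_nonneg_left h2 (by positivity)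
  · rintro ⟨s, hs, hpos⟩
    refine ⟨s * f, ⟨s, hs⟩ * d, ?_, fun x hx => ?_⟩
    · rw [Localization.mk_eq_mk_iff, Localization.r_iff_exists]
      exact ⟨1, by simp; ring⟩
    · simp only [Submonoid.coe_mul, map_mul]
      by_cases h0 : eval x s = 0
      · simp [h0]
      · have := mul_nonneg (sq_nonneg (eval x s)) (hpos x hx h0)
        linarith [this]

/-- The coordinate form of the theorem on the span of finitely many fractions `f i / d`. -/
theorem isClosed_coordinates {n m : ℕ} {D : Submonoid (MvPolynomial (Fin n) ℝ)}
    (hD0 : (0 : MvPolynomial (Fin n) ℝ) ∉ D) {K : Set (Fin n → ℝ)} (hK : IsSemialgebraic K)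
    (f : Fin m → MvPolynomial (Fin n) ℝ) (d : D) :
    IsClosed {v : Fin m → ℝ | Localization.mk (∑ i, v i • f i) d ∈ PosE D K} := by
  refine IsSeqClosed.isClosed fun v w hv hvw => ?_
  simp only [Set.mem_ofPred_eq, mk_mem_PosE_iff hD0] at hv ⊢
  choose s hs hpos using hv
  have hcont : ∀ x : Fin n → ℝ, Continuous fun v : Fin m → ℝ =>
      eval x (∑ i, v i • f i) * eval x (d : MvPolynomial (Fin n) ℝ) := by
    intro x
    simp only [map_sum, smul_eval]
    fun_prop
  have hO : IsOpen {x : Fin n → ℝ |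
      eval x (∑ i, w i • f i) * eval x (d : MvPolynomial (Fin n) ℝ) < 0} :=
    isOpen_lt ((MvPolynomial.continuous_eval _).mul (MvPolynomial.continuous_eval _))
      continuous_const
  obtain ⟨N, hN⟩ := semialgebraic_finite_subcover hK hO s fun x hx hneg => by
    by_contra! hcon
    exact (not_le.2 hneg) (ge_of_tendsto' (((hcont x).tendsto w).comp hvw)
      fun k => hpos k x hx (hcon k))
  refine ⟨∏ k ∈ Finset.range N, s k, prod_mem fun k _ => hs k, fun x hx hne => ?_⟩
  by_contra hneg
  obtain ⟨k, hk, h0⟩ := hN x hx (not_le.1 hneg)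
  exact hne (by rw [map_prod]; exact Finset.prod_eq_zero (Finset.mem_range.2 hk) h0)

/-- For a semialgebraic set `K`, the preordering `Pos^E(K)` is closed
in the topology of finitely open sets on `E = D⁻¹ℝ[X]`. -/
theorem posE_isClosed_finTop
    {n : ℕ} (D : Submonoid (MvPolynomial (Fin n) ℝ))
    (hD0 : (0 : MvPolynomial (Fin n) ℝ) ∉ D)
    (K : Set (Fin n → ℝ)) (hK : IsSemialgebraic K) :
    @IsClosed _ (finTop (Localization D)) (PosE D K) := by
  refine @IsClosed.mk _ (finTop (Localization D)) _ ?_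
  intro U hU
  have hfree : Module.Free ℝ U := Module.Free.of_divisionRing ℝ U
  let β := Module.finBasis ℝ U
  -- a common denominator for the basis of `U`
  obtain ⟨d, hd⟩ := IsLocalization.exist_integer_multiples_of_finite D
    fun i => (β i : Localization D)
  choose f hf using hd
  have hβ : ∀ i, (β i : Localization D) = Localization.mk (f i) d := by
    intro i
    rw [Localization.mk_eq_mk', eq_comm, IsLocalization.mk'_eq_iff_eq_mul, hf i,
      Algebra.smul_def, mul_comm]
  have hrep : ∀ u : U, (u : Localization D) = Localization.mk (∑ i, β.equivFun u i • f i) d := by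
    intro u
    have hu : (u : Localization D) = ∑ i, β.equivFun u i • (β i : Localization D) := by
      conv_lhs => rw [← β.sum_equivFun u]
      exact map_sum U.subtype _ _
    rw [hu, Localization.mk_sum]
    exact Finset.sum_congr rfl fun i _ => by rw [hβ, Localization.smul_mk]
  let _ : TopologicalSpace U := weakTop U
  have hcont : Continuous (fun u : U => β.equivFun u) := by
    refine continuous_pi fun i => ?_
    exact continuous_iff_le_induced.2
      (iInf_le (fun L : U →ₗ[ℝ] ℝ => TopologicalSpace.induced L inferInstance) (β.coord i))
  have hset : (Subtype.val : U → Localization D) ⁻¹' (PosE D K)ᶜ = (fun u : U => β.equivFun u) ⁻¹'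
      {v | Localization.mk (∑ i, v i • f i) d ∈ PosE D K}ᶜ := by
    ext u
    simp only [Set.mem_preimage, Set.mem_compl_iff, Set.mem_ofPred_eq, ← hrep u]
  rw [hset]
  exact (isClosed_coordinates hD0 hK f d).isOpen_compl.preimage hcont

end
end

section
/- Let E and F be real vector spaces, π : E → F a surjective linear map, and C a convex cone in E containing the kernel of π. Then π(closure(C)) = closure(π(C)), where either both E and F carry the finest locally convex topology, or both carry the topology of finitely open sets. -/
/-!
A linear section `s` of `π` satisfies `s (π c) - c ∈ ker π ⊆ C`, so `s` maps `π '' C` into `C`.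
Both closures are functorial for linear maps: the dual closure because functionals can be
composed with linear maps, the closure in the finitely open topology because every linear map
is continuous for it (`continuous_finTop`). Applying this to `π` gives `⊆`, and applying it to
`s` gives `s y ∈ closure C` for every `y ∈ closure (π '' C)`, with `π (s y) = y`.
-/

open MvPolynomial MeasureTheory

noncomputable section

theorem continuous_weakTop {V W : Type*} [AddCommGroup V] [Module ℝ V] [AddCommGroup W]
    [Module ℝ W] (f : V →ₗ[ℝ] W) : @Continuous _ _ (weakTop V) (weakTop W) f := by
  letI := weakTop V
  refine continuous_iInf_rng.2 fun L => continuous_induced_rng.2 ?_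
  exact continuous_iInf_dom (i := L.comp f) continuous_induced_dom

/-- Linear maps are continuous for the topologies of finitely open sets, because they map each
finite-dimensional subspace `U` to the finite-dimensional subspace `U.map f`. -/
theorem continuous_finTop {E F : Type*} [AddCommGroup E] [Module ℝ E] [AddCommGroup F]
    [Module ℝ F] (f : E →ₗ[ℝ] F) : @Continuous _ _ (finTop E) (finTop F) f := by
  letI := finTop E
  letI := finTop F
  refine continuous_def.2 fun O hO U hU => ?_
  let g : U →ₗ[ℝ] U.map f :=
    f.restrict fun x hx => Submodule.mem_map_of_mem hx
  letI := weakTop U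
  letI := weakTop (U.map f)
  exact (hO (U.map f) inferInstance).preimage (continuous_weakTop g)

theorem mapsTo_dualClosure {E F : Type*} [AddCommGroup E] [Module ℝ E] [AddCommGroup F]
    [Module ℝ F] (f : E →ₗ[ℝ] F) {A : Set E} {B : Set F} (h : Set.MapsTo f A B) :
    Set.MapsTo f (dualClosure A) (dualClosure B) :=
  fun _ hx L hL => hx (L.comp f) fun c hc => hL _ (h hc)

theorem mapsTo_closure_finTop {E F : Type*} [AddCommGroup E] [Module ℝ E] [AddCommGroup F]
    [Module ℝ F] (f : E →ₗ[ℝ] F) {A : Set E} {B : Set F} (h : Set.MapsTo f A B) :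
    Set.MapsTo f (@closure _ (finTop E) A) (@closure _ (finTop F) B) := by
  letI := finTop E
  letI := finTop F
  exact h.closure (continuous_finTop f)

/-- For a surjective linear map `π : E → F` and a convex cone
`C ⊆ E` containing `ker π`, the image of the closure of `C` equals the closure of the
image of `C`, both for the finest locally convex topology (described dually) and for
the topology of finitely open sets. -/
theorem image_closure_eq_closure_image_of_cone
    {E F : Type*} [AddCommGroup E] [Module ℝ E] [AddCommGroup F] [Module ℝ F]
    (π : E →ₗ[ℝ] F) (hsurj : Function.Surjective π)
    (C : Set E)
    (hadd : ∀ a ∈ C, ∀ b ∈ C, a + b ∈ C)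
    (hsmul : ∀ r : ℝ, 0 ≤ r → ∀ a ∈ C, r • a ∈ C)
    (hker : (LinearMap.ker π : Set E) ⊆ C) :
    π '' dualClosure C = dualClosure (π '' C) ∧
    π '' (@closure _ (finTop E) C) = @closure _ (finTop F) (π '' C) := by
  obtain ⟨s, hs⟩ := π.exists_rightInverse_of_surjective (LinearMap.range_eq_top.2 hsurj)
  have hs' : ∀ y, π (s y) = y := fun y => LinearMap.congr_fun hs y
  have hπC : Set.MapsTo π C (π '' C) := Set.mapsTo_image π C
  have hsC : Set.MapsTo s (π '' C) C := by
    rintro _ ⟨c, hc, rfl⟩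
    have hk : s (π c) - c ∈ C := hker (by simp [hs'])
    simpa using hadd _ hc _ hk
  constructor
  · exact Set.Subset.antisymm (mapsTo_dualClosure π hπC).image_subset
      fun y hy => ⟨s y, mapsTo_dualClosure s hsC hy, hs' y⟩
  · exact Set.Subset.antisymm (mapsTo_closure_finTop π hπC).image_subset
      fun y hy => ⟨s y, mapsTo_closure_finTop s hsC hy, hs' y⟩

end
end
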